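/- Let a > 0 and l, l' be real numbers, and for x ∈ (0, πa) define the Pöschl–Teller superpotential W_{l,l'}(x) = −(1/(2a))·( l·cot(x/(2a)) − l'·tan(x/(2a)) ). Then for every x ∈ (0, πa) the shape invariance relation holds: W_{l,l'}(x)² + W_{l,l'}'(x) = W_{l+1,l'+1}(x)² − W_{l+1,l'+1}'(x) + (l + l' + 1)/a². Equivalently, the SUSY partner potentials V₂(x; l, l') = W_{l,l'}² + W_{l,l'}' and V₁(x; l, l') = W_{l,l'}² − W_{l,l'}' satisfy V₂(x; l, l') = V₁(x; l+1, l'+1) + (l + l' + 1)/a², so the Pöschl–Teller potentials of first type are shape invariant with parameter shift (l, l') → (l+1, l'+1) and remainder R = (l + l' + 1)/a². -/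

import Mathlib

open Real

/-- Shape invariance of the Pöschl–Teller potentials of first type:
with `W_{l,l'}(x) = -(1/(2a))(l·cot(x/2a) - l'·tan(x/2a))`, one has
`W_{l,l'}² + W_{l,l'}' = W_{l+1,l'+1}² - W_{l+1,l'+1}' + (l+l'+1)/a²` on `(0, πa)`,
i.e. `V₂(x; l, l') = V₁(x; l+1, l'+1) + (l+l'+1)/a²`. -/
theorem poschlTeller_shape_invariance
    (a l l' : ℝ) (ha : 0 < a) (W : ℝ → ℝ → ℝ → ℝ)
    (hW : W = fun l l' x => -(1 / (2 * a)) *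
      (l * Real.cot (x / (2 * a)) - l' * Real.tan (x / (2 * a)))) :
    ∀ x ∈ Set.Ioo 0 (π * a),
      (W l l' x) ^ 2 + deriv (W l l') x
        = (W (l + 1) (l' + 1) x) ^ 2 - deriv (W (l + 1) (l' + 1)) x
          + (l + l' + 1) / a ^ 2 := by
  intro x hx
  obtain ⟨hx0, hx1⟩ := hx
  have hy0 : 0 < x / (2 * a) := by positivity
  have hy1 : x / (2 * a) < π / 2 := by
    rw [div_lt_div_iff₀ (by positivity) (by norm_num)]
    nlinarith
  have hs : Real.sin (x / (2 * a)) ≠ 0 :=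
    (Real.sin_pos_of_pos_of_lt_pi hy0 (by linarith [Real.pi_pos])).ne'
  have hc : Real.cos (x / (2 * a)) ≠ 0 :=
    (Real.cos_pos_of_mem_Ioo ⟨by linarith [Real.pi_pos], hy1⟩).ne'
  have hd : ∀ m m' : ℝ, deriv (W m m') x = (1 / (2 * a)) ^ 2 *
      (m * (1 / Real.sin (x / (2 * a)) ^ 2) + m' * (1 / Real.cos (x / (2 * a)) ^ 2)) := by
    intro m m'
    have h1 : HasDerivAt (fun x : ℝ => x / (2 * a)) (1 / (2 * a)) x :=
      (hasDerivAt_id x).div_const _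
    have ht := (Real.hasDerivAt_tan hc).comp x h1
    have hct : HasDerivAt (fun x : ℝ => Real.cot (x / (2 * a)))
        (-(1 / Real.sin (x / (2 * a)) ^ 2) * (1 / (2 * a))) x := by
      have h2 := (h1.cos).div (h1.sin) hs
      have he : (fun x : ℝ => Real.cot (x / (2 * a))) =
          (fun x => Real.cos (x / (2 * a))) / (fun x => Real.sin (x / (2 * a))) := by
        funext y
        simp [Real.cot_eq_cos_div_sin]
      rw [he]
      refine h2.congr_deriv ?_
      have := Real.sin_sq_add_cos_sq (x / (2 * a))
      field_simp
      linarith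
    have h3 := ((hct.const_mul m).sub (ht.const_mul m')).const_mul (-(1 / (2 * a)))
    rw [hW]
    refine Eq.trans (HasDerivAt.deriv h3) ?_
    ring
  rw [hd, hd, hW]
  simp only [Real.cot_eq_cos_div_sin, Real.tan_eq_sin_div_cos]
  have h := Real.sin_sq_add_cos_sq (x / (2 * a))
  generalize Real.sin (x / (2 * a)) = s at *
  generalize Real.cos (x / (2 * a)) = c at *
  have e1 : 1 / s ^ 2 = 1 + (c / s) ^ 2 := by
    field_simp
    linarith
  have e2 : 1 / c ^ 2 = 1 + (s / c) ^ 2 := by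
    field_simp
    linarith
  have e3 : (c / s) * (s / c) = 1 := by field_simp
  rw [e1, e2]
  generalize c / s = p at *
  generalize s / c = q at *
  have e4 : (l + l' + 1) / a ^ 2 = (1 / (2 * a)) ^ 2 * (4 * (l + l' + 1)) := by
    field_simp
    norm_num
  rw [e4]
  linear_combination (1 / (2 * a)) ^ 2 * (-2 * l * l' + 2 * (l + 1) * (l' + 1)) * e3
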